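/- arXiv:2602.03195 — 2 statements merged into one kernel-verified Lean document; each statement's English description precedes it below -/
import Mathlib

section
/- Let V be a finite nonempty set, let π : V → ℝ be a probability mass function (π(i) ≥ 0 for all i and ∑_{i∈V} π(i) = 1), let P ⊆ V be a nonempty subset with total mass S := ∑_{i∈P} π(i) > 0, and assume the top-K property: π(k) ≤ π(i) for every k ∈ V \ P and every i ∈ P. Then for every real constant A, the total variance of the masked (renormalized) policy-gradient estimator does not exceed that of the full estimator: ∑_{i∈P} (π(i)/S)·(1 − π(i)/S)·A² ≤ ∑_{i∈V} π(i)·(1 − π(i))·A². -/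
/-- Proposition 1 (Variance Reduction), non-strict form: restricting a softmax
policy-gradient estimator to a top-`K` promising set `P` and renormalizing does
not increase the total variance `∑ π i (1 - π i) A²`. -/
theorem variance_reduction_le
    {V : Type*} [Fintype V] [Nonempty V]
    (π : V → ℝ) (hπ0 : ∀ i, 0 ≤ π i) (hπ1 : ∑ i, π i = 1)
    (P : Finset V) (hP : P.Nonempty)
    (S : ℝ) (hS : S = ∑ i ∈ P, π i) (hSpos : 0 < S)
    (htop : ∀ k ∉ P, ∀ i ∈ P, π k ≤ π i)
    (A : ℝ) :
    ∑ i ∈ P, (π i / S) * (1 - π i / S) * A ^ 2 ≤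
      ∑ i, π i * (1 - π i) * A ^ 2 := by
  classical
  obtain ⟨j, hj, hmin⟩ := P.exists_min_image π hP
  have hsplit : ∀ f : V → ℝ, ∑ i, f i = ∑ i ∈ P, f i + ∑ i ∈ Pᶜ, f i := fun f =>
    (Finset.sum_add_sum_compl P f).symm
  have hT : ∑ i ∈ Pᶜ, π i = 1 - S := by
    have := hsplit π
    linarith
  have hT0 : 0 ≤ 1 - S := hT ▸ Finset.sum_nonneg (fun i _ => hπ0 i)
  have hR : ∑ i ∈ Pᶜ, π i ^ 2 ≤ π j * (1 - S) := by
    rw [← hT, Finset.mul_sum]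
    refine Finset.sum_le_sum fun k hk => ?_
    have := htop k (Finset.mem_compl.mp hk) j hj
    nlinarith [hπ0 k]
  have hQ : π j * S ≤ ∑ i ∈ P, π i ^ 2 := by
    rw [hS, Finset.mul_sum]
    refine Finset.sum_le_sum fun k hk => ?_
    have := hmin k hk
    nlinarith [hπ0 k]
  have hL : ∑ i ∈ P, (π i / S) * (1 - π i / S) * A ^ 2
      = (1 - (∑ i ∈ P, π i ^ 2) / S ^ 2) * A ^ 2 := by
    rw [← Finset.sum_mul]
    congr 1
    have h1 : ∑ i ∈ P, π i / S = 1 := by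
      rw [← Finset.sum_div, ← hS, div_self hSpos.ne']
    rw [← h1, Finset.sum_div, ← Finset.sum_sub_distrib]
    refine Finset.sum_congr rfl fun i _ => ?_
    rw [h1]
    ring
  have hF : ∑ i, π i * (1 - π i) * A ^ 2
      = (1 - (∑ i ∈ P, π i ^ 2 + ∑ i ∈ Pᶜ, π i ^ 2)) * A ^ 2 := by
    rw [← Finset.sum_mul, ← hsplit (fun i => π i ^ 2), ← hπ1, ← Finset.sum_sub_distrib]
    congr 1
    refine Finset.sum_congr rfl fun i _ => ?_
    rw [hπ1]
    ring
  rw [hL, hF]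
  refine mul_le_mul_of_nonneg_right ?_ (sq_nonneg A)
  generalize ∑ i ∈ P, π i ^ 2 = Q at *
  generalize ∑ i ∈ Pᶜ, π i ^ 2 = R at *
  have hm := hπ0 j
  have key : Q + R ≤ Q / S ^ 2 := by
    rw [le_div_iff₀ (by positivity)]
    have h1 : R * S ^ 2 ≤ π j * (1 - S) * S ^ 2 :=
      mul_le_mul_of_nonneg_right hR (by positivity)
    have h2 : π j * S * (1 - S ^ 2) ≤ Q * (1 - S ^ 2) :=
      mul_le_mul_of_nonneg_right hQ (by nlinarith)
    have h3 : 0 ≤ π j * S * (1 - S) := by positivity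
    nlinarith
  linarith
end

section
/- Let V be a finite nonempty set, let π : V → ℝ be a probability mass function, let P ⊆ V be a nonempty subset with total mass S := ∑_{i∈P} π(i), and assume the top-K property: π(k) ≤ π(i) for every k ∈ V \ P and every i ∈ P. If 0 < S < 1, min_{i∈P} π(i) > 0, and A ≠ 0 is a real constant, then the variance reduction is strict: ∑_{i∈P} (π(i)/S)·(1 − π(i)/S)·A² < ∑_{i∈V} π(i)·(1 − π(i))·A². -/
/-- Proposition 1 (Variance Reduction), strict form: if the masked-out tail
carries strictly positive mass (`S < 1`), every promising token has positive
probability, and the advantage `A` is nonzero, then the total variance of the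
renormalized masked estimator is strictly smaller than that of the full one. -/
theorem variance_reduction_lt
    {V : Type*} [Fintype V] [Nonempty V]
    (π : V → ℝ) (hπ0 : ∀ i, 0 ≤ π i) (hπ1 : ∑ i, π i = 1)
    (P : Finset V) (hP : P.Nonempty)
    (S : ℝ) (hS : S = ∑ i ∈ P, π i)
    (htop : ∀ k ∉ P, ∀ i ∈ P, π k ≤ π i)
    (hSpos : 0 < S) (hSlt : S < 1)
    (hmin : 0 < P.inf' hP π)
    (A : ℝ) (hA : A ≠ 0) :
    ∑ i ∈ P, (π i / S) * (1 - π i / S) * A ^ 2 <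
      ∑ i, π i * (1 - π i) * A ^ 2 := by
  classical
  obtain ⟨m, hm⟩ : ∃ m, m = P.inf' hP π := ⟨_, rfl⟩
  rw [← hm] at hmin
  have hle : ∀ i ∈ P, m ≤ π i := fun i hi => hm ▸ Finset.inf'_le π hi
  have hge : ∀ k ∈ Pᶜ, π k ≤ m := fun k hk => by
    rw [hm]
    exact Finset.le_inf' hP π (fun i hi => htop k (Finset.mem_compl.mp hk) i hi)
  have hsplit1 : ∑ i ∈ P, π i + ∑ i ∈ Pᶜ, π i = 1 := by
    rw [Finset.sum_add_sum_compl, hπ1]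
  have hsplit2 : ∑ i ∈ P, π i ^ 2 + ∑ i ∈ Pᶜ, π i ^ 2 = ∑ i, π i ^ 2 :=
    Finset.sum_add_sum_compl _ _
  have hQ : m * S ≤ ∑ i ∈ P, π i ^ 2 := by
    rw [hS, Finset.mul_sum]
    exact Finset.sum_le_sum fun i hi => by nlinarith [hle i hi, hπ0 i]
  have hT : ∑ i ∈ Pᶜ, π i ^ 2 ≤ m * (1 - S) := by
    have : 1 - S = ∑ i ∈ Pᶜ, π i := by linarith
    rw [this, Finset.mul_sum]
    exact Finset.sum_le_sum fun i hi => by nlinarith [hge i hi, hπ0 i]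
  have hL : ∑ i ∈ P, (π i / S) * (1 - π i / S) * A ^ 2
      = (1 - (∑ i ∈ P, π i ^ 2) / S ^ 2) * A ^ 2 := by
    rw [← Finset.sum_mul]
    congr 1
    have h1 : (∑ i ∈ P, π i) / S = 1 := by rw [← hS]; exact div_self hSpos.ne'
    rw [← h1, Finset.sum_div, Finset.sum_div, ← Finset.sum_sub_distrib, ← Finset.sum_div, h1]
    exact Finset.sum_congr rfl fun i _ => by ring
  have hR : ∑ i, π i * (1 - π i) * A ^ 2 = (1 - ∑ i, π i ^ 2) * A ^ 2 := by
    rw [← Finset.sum_mul]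
    congr 1
    rw [← hπ1, ← Finset.sum_sub_distrib, hπ1]
    exact Finset.sum_congr rfl fun i _ => by ring
  rw [hL, hR, ← hsplit2]
  generalize ∑ i ∈ P, π i ^ 2 = Q at *
  generalize ∑ i ∈ Pᶜ, π i ^ 2 = T at *
  have hA2 : 0 < A ^ 2 := by positivity
  have hQ0 : 0 < Q := lt_of_lt_of_le (mul_pos hmin hSpos) hQ
  have key : Q + T < Q / S ^ 2 := by
    rw [lt_div_iff₀ (by positivity)]
    have e1 : T * S ≤ Q * (1 - S) := by
      calc T * S ≤ m * (1 - S) * S := by gcongr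
        _ = m * S * (1 - S) := by ring
        _ ≤ Q * (1 - S) := by
          apply mul_le_mul_of_nonneg_right hQ; linarith
    have e2 : (Q + T) * S * S ≤ Q * S := by
      apply mul_le_mul_of_nonneg_right _ hSpos.le; linarith
    nlinarith
  apply mul_lt_mul_of_pos_right _ hA2
  linarith
end
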